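/- Let w = w(x_1, …, x_k) be a word and let w'(x_1, …, x_{k+1}) = [w(x_1, …, x_k), x_{k+1}]. If w is good, then w' is good. -/

import Mathlib

open scoped Classical

/-- The commutator `[x, y] = x⁻¹y⁻¹xy` (the convention used in the paper). -/
def pcomm {G : Type*} [Group G] (x y : G) : G := x⁻¹ * y⁻¹ * x * y

/-- The left-normed commutator word `w_k = [x₁, …, x_k] ∈ F_k`,
defined inductively by `w₁ = x₁` and `w_{j+1} = [w_j, x_{j+1}]`. -/
def commWord : (k : ℕ) → FreeGroup (Fin k)
  | 0 => 1
  | 1 => FreeGroup.of 0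
  | (k + 2) =>
      pcomm (FreeGroup.map Fin.castSucc (commWord (k + 1))) (FreeGroup.of (Fin.last (k + 1)))

/-- The left-normed commutator `[g₁, …, g_k]` of group elements. -/
def commElt {G : Type*} [Group G] : {k : ℕ} → (Fin k → G) → G
  | 0, _ => 1
  | 1, f => f 0
  | (_ + 2), f => pcomm (commElt (fun i => f i.castSucc)) (f (Fin.last _))

/-- The word `[x₁², x₂, …, x_k] ∈ F_k`, defined inductively by
`u₁ = x₁²` and `u_{j+1} = [u_j, x_{j+1}]`. -/
def sqCommWord : (k : ℕ) → FreeGroup (Fin k)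
  | 0 => 1
  | 1 => FreeGroup.of 0 ^ 2
  | (k + 2) =>
      pcomm (FreeGroup.map Fin.castSucc (sqCommWord (k + 1))) (FreeGroup.of (Fin.last (k + 1)))

/-- `P_{G,w}(g) = |w_G⁻¹(g)| / |G|^k`, the probability that the word map of `w`
takes the value `g` on a uniformly random `k`-tuple. -/
noncomputable def wordProb {k : ℕ} {G : Type*} [Group G] (w : FreeGroup (Fin k)) (g : G) : ℝ :=
  (Nat.card {f : Fin k → G // FreeGroup.lift f w = g} : ℝ) / (Nat.card G : ℝ) ^ k

/-- A group is residually finite if every nontrivial element is excluded by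
some normal subgroup of finite index. -/
def ResiduallyFinite (Γ : Type*) [Group Γ] : Prop :=
  ∀ g : Γ, g ≠ 1 → ∃ Δ : Subgroup Γ, Δ.Normal ∧ Δ.FiniteIndex ∧ g ∉ Δ

/-- A word `w ≠ 1` is a probabilistic identity of `Γ` if for some `ε > 0` every
finite quotient `H` of `Γ` satisfies `P_{H,w}(1) ≥ ε`. -/
def IsProbIdentity {k : ℕ} (Γ : Type*) [Group Γ] (w : FreeGroup (Fin k)) : Prop :=
  w ≠ 1 ∧ ∃ ε : ℝ, 0 < ε ∧
    ∀ (Δ : Subgroup Γ) [Δ.Normal], Δ.FiniteIndex → ε ≤ wordProb w (1 : Γ ⧸ Δ)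

/-- `G(H)`: the intersection of the kernels of all homomorphisms from `G` to `H`. -/
def kerInt (G H : Type*) [Group G] [Group H] : Subgroup G := ⨅ φ : G →* H, φ.ker

/-- A word `1 ≠ w ∈ F_k` is good if for every `ε > 0` there is a word `1 ≠ v ∈ F_m`,
depending only on `w` and `ε`, which is an identity of every finite group `G`
satisfying `P_{G,w}(g) ≥ ε` for some `g ∈ G`. -/
def IsGood {k : ℕ} (w : FreeGroup (Fin k)) : Prop :=
  w ≠ 1 ∧ ∀ ε : ℝ, 0 < ε → ∃ (m : ℕ) (v : FreeGroup (Fin m)), v ≠ 1 ∧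
    ∀ (G : Type) [Group G] [Finite G],
      (∃ g : G, ε ≤ wordProb w g) → ∀ f : Fin m → G, FreeGroup.lift f v = 1

/-
Let `N` be large and let `K ⊴ G` be the centralizer of all `N!`-th powers. For fixed `a` the fibres
of `y ↦ [a, y]` are empty or cosets of `C(a)`, so they have density at most `1 / |G : C(a)|`, and if
`|G : C(a)| ≤ N` then `a` commutes with every `N!`-th power, that is, `a ∈ K`. Averaging over
`a = w(x)` gives `P_{G,w'}(g) ≤ P_{G/K,w}(1) + 1/(N+1)`. If the left side is at least `ε` and
`1/(N+1) < ε/2`, goodness of `w` yields a law `v` of `G/K`, whose values in `G` lie in `K`. So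
`[v, y^{N!}]` is a law of `G`; it is nontrivial because `v` and a power of a new free generator do
not commute.
-/

section Commutator

variable {G H : Type*} [Group G] [Group H]

theorem pcomm_eq_one_iff {x y : G} : pcomm x y = 1 ↔ Commute x y := by
  rw [pcomm, mul_assoc, ← mul_inv_rev, inv_mul_eq_one, eq_comm, commute_iff_eq]

theorem map_pcomm (φ : G →* H) (x y : G) : φ (pcomm x y) = pcomm (φ x) (φ y) := by
  simp only [pcomm, map_mul, map_inv]

theorem pcomm_eq_pcomm_iff {a y z : G} :
    pcomm a y = pcomm a z ↔ y * z⁻¹ ∈ Subgroup.centralizer {a} := by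
  have h_conj : pcomm a y = pcomm a z ↔ y⁻¹ * a * y = z⁻¹ * a * z := by
    simp only [pcomm, mul_assoc, mul_right_inj]
  rw [h_conj, Subgroup.mem_centralizer_singleton_iff, mul_assoc, inv_mul_eq_iff_eq_mul,
    ← mul_assoc, ← mul_inv_eq_iff_eq_mul, eq_comm]
  simp only [mul_assoc]

theorem card_pcomm_eq_le_card_centralizer (a g : G) [Finite (Subgroup.centralizer {a})] :
    Nat.card {y : G // pcomm a y = g} ≤ Nat.card (Subgroup.centralizer {a}) := by
  rcases isEmpty_or_nonempty {y : G // pcomm a y = g} with _ | ⟨z, hz⟩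
  · simp only [Nat.card_of_isEmpty, zero_le]
  · refine Nat.card_le_card_of_injective
      (fun y => ⟨y * z⁻¹, pcomm_eq_pcomm_iff.1 (y.2.trans hz.symm)⟩) fun y₁ y₂ h => ?_
    exact Subtype.ext (mul_right_cancel (congrArg Subtype.val h))

end Commutator

theorem map_freeGroup_lift {α G H : Type*} [Group G] [Group H] (φ : G →* H) (f : α → G)
    (w : FreeGroup α) : φ (FreeGroup.lift f w) = FreeGroup.lift (φ ∘ f) w :=
  FreeGroup.lift_unique (φ.comp (FreeGroup.lift f)) (by simp)

theorem freeGroup_lift_map {α β G : Type*} [Group G] (g : β → G) (f : α → β) (w : FreeGroup α) :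
    FreeGroup.lift g (FreeGroup.map f w) = FreeGroup.lift (g ∘ f) w := by
  rw [FreeGroup.map_eq_lift, map_freeGroup_lift]
  congr 2
  ext i
  simp

theorem lift_pcomm_map_castSucc {k : ℕ} {G : Type*} [Group G] (w : FreeGroup (Fin k))
    (u : FreeGroup (Fin (k + 1))) (f : Fin (k + 1) → G) :
    FreeGroup.lift f (pcomm (FreeGroup.map Fin.castSucc w) u) =
      pcomm (FreeGroup.lift (Fin.init f) w) (FreeGroup.lift f u) := by
  rw [map_pcomm, freeGroup_lift_map]
  rfl

/-- The inclusion of the base group `Q → D` into the regular wreath product `D ≀ᵣ Q`. -/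
def wreathBase (D Q : Type*) [Group D] [Group Q] : (Q → D) →* RegularWreathProduct D Q where
  toFun f := ⟨f, 1⟩
  map_one' := rfl
  map_mul' f g := by ext <;> simp

theorem commute_inl_wreathBase_iff {D Q : Type*} [Group D] [Group Q] {q : Q} {f : Q → D} :
    Commute (RegularWreathProduct.inl q) (wreathBase D Q f) ↔ ∀ x, f (q⁻¹ * x) = f x := by
  simp [commute_iff_eq, RegularWreathProduct.ext_iff, wreathBase, funext_iff]

theorem not_commute_inl_wreathBase_mulSingle {D Q : Type*} [Group D] [Group Q] [DecidableEq Q]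
    {q : Q} {d : D} (hq : q ≠ 1) (hd : d ≠ 1) :
    ¬ Commute (RegularWreathProduct.inl q) (wreathBase D Q (Pi.mulSingle 1 d)) := by
  rw [commute_inl_wreathBase_iff]
  intro h
  have h_one := h 1
  rw [mul_one, Pi.mulSingle_eq_same, Pi.mulSingle_eq_of_ne (inv_ne_one.2 hq)] at h_one
  exact hd h_one.symm

/- Separates the two elements in `ℤ ≀ F_α`, where `w` acts on the base group by a nontrivial shift
and `b` is sent to a base element supported at the identity. -/
theorem not_commute_map_of_pow {α β : Type*} {f : α → β} (hf : f.Injective) {b : β}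
    (hb : b ∉ Set.range f) {w : FreeGroup α} (hw : w ≠ 1) {n : ℕ} (hn : n ≠ 0) :
    ¬ Commute (FreeGroup.map f w) (FreeGroup.of b ^ n) := by
  intro h
  let ι : FreeGroup α →* RegularWreathProduct (Multiplicative ℤ) (FreeGroup α) :=
    RegularWreathProduct.inl
  let t := wreathBase (Multiplicative ℤ) (FreeGroup α) (Pi.mulSingle 1 (Multiplicative.ofAdd 1))
  let φ := FreeGroup.lift (Function.extend f (ι ∘ FreeGroup.of) fun _ => t)
  have h_map : φ (FreeGroup.map f w) = ι w := by
    rw [freeGroup_lift_map, Function.extend_comp hf, ← map_freeGroup_lift, FreeGroup.lift_of_apply]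
  have h_pow : φ (FreeGroup.of b ^ n) =
      wreathBase _ _ (Pi.mulSingle 1 (Multiplicative.ofAdd (1 : ℤ) ^ n)) := by
    rw [map_pow, FreeGroup.lift_apply_of, Function.extend_apply' _ _ _ hb, Pi.mulSingle_pow,
      map_pow]
  have h_comm := h.map φ
  rw [h_map, h_pow] at h_comm
  refine not_commute_inl_wreathBase_mulSingle hw (fun h_one => hn ?_) h_comm
  simpa [← ofAdd_nsmul] using h_one

theorem pcomm_map_castSucc_of_last_pow_ne_one {k : ℕ} {w : FreeGroup (Fin k)} (hw : w ≠ 1) {n : ℕ}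
    (hn : n ≠ 0) :
    pcomm (FreeGroup.map Fin.castSucc w) (FreeGroup.of (Fin.last k) ^ n) ≠ 1 :=
  pcomm_eq_one_iff.not.2 <| not_commute_map_of_pow (Fin.castSucc_injective k)
    (fun ⟨i, hi⟩ => Fin.castSucc_ne_last i hi) hw hn

section PowCentralizer

variable {G : Type*} [Group G]

/-- The centralizer in `G` of the set of `n`-th powers. With `n = N!` it is a normal subgroup
containing every element with at most `N` conjugates. -/
def powCentralizer (G : Type*) [Group G] (n : ℕ) : Subgroup G :=
  Subgroup.centralizer (Set.range fun z : G => z ^ n)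

theorem mem_powCentralizer {n : ℕ} {a : G} : a ∈ powCentralizer G n ↔ ∀ z, Commute a (z ^ n) := by
  simp only [powCentralizer, Subgroup.mem_centralizer_iff, Set.forall_mem_range, commute_iff_eq,
    eq_comm]

instance powCentralizer_normal (n : ℕ) : (powCentralizer G n).Normal where
  conj_mem a ha c := by
    rw [mem_powCentralizer] at ha ⊢
    intro z
    have h_conj : z ^ n = c * (c⁻¹ * z * c) ^ n * c⁻¹ := by
      rw [← conj_pow]
      group
    rw [h_conj, Commute.conj_iff]
    exact ha _

theorem mem_powCentralizer_factorial {a : G} {N : ℕ}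
    (h_ne : (Subgroup.centralizer {a}).index ≠ 0) (h_le : (Subgroup.centralizer {a}).index ≤ N) :
    a ∈ powCentralizer G N.factorial := by
  refine mem_powCentralizer.2 fun z => ?_
  have h_mem : z ^ N.factorial ∈ Subgroup.centralizer {a} :=
    Subgroup.pow_mem_of_index_ne_zero_of_dvd h_ne z fun m hm hm_le =>
      Nat.dvd_factorial hm (hm_le.trans h_le)
  exact (Subgroup.mem_centralizer_singleton_iff.1 h_mem).symm

/- An infinite index is `0` in Lean, and then the left side is `0⁻¹ = 0`, as it should be. -/
theorem inv_index_centralizer_le (a : G) (N : ℕ) :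
    ((Subgroup.centralizer {a}).index : ℝ)⁻¹ ≤
      (if a ∈ powCentralizer G N.factorial then 1 else 0) + 1 / (N + 1) := by
  split_ifs with ha
  · exact (Nat.cast_inv_le_one _).trans (le_add_of_nonneg_right (by positivity))
  · rw [zero_add, one_div]
    rcases eq_or_ne (Subgroup.centralizer {a}).index 0 with h | h
    · rw [h, Nat.cast_zero, inv_zero]
      positivity
    · have h_lt : N < (Subgroup.centralizer {a}).index :=
        not_le.1 fun h_le => ha (mem_powCentralizer_factorial h h_le)
      exact inv_anti₀ (by positivity) (by exact_mod_cast h_lt)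

theorem lift_pcomm_pow_eq_one {m n : ℕ} {v : FreeGroup (Fin m)}
    (hv : ∀ f : Fin m → G ⧸ powCentralizer G n, FreeGroup.lift f v = 1) (f : Fin (m + 1) → G) :
    FreeGroup.lift f
      (pcomm (FreeGroup.map Fin.castSucc v) (FreeGroup.of (Fin.last m) ^ n)) = 1 := by
  have h_mem : FreeGroup.lift (Fin.init f) v ∈ powCentralizer G n := by
    rw [← QuotientGroup.eq_one_iff, ← QuotientGroup.mk'_apply, map_freeGroup_lift]
    exact hv _
  rw [lift_pcomm_map_castSucc, pcomm_eq_one_iff, map_pow]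
  exact mem_powCentralizer.1 h_mem _

end PowCentralizer

section WordProb

variable {k : ℕ} {G H : Type*} [Group G] [Group H]

theorem card_preimage_mul_card (φ : G →* H) (hφ : Function.Surjective φ) (S : Set H) :
    Nat.card (φ ⁻¹' S) * Nat.card H = Nat.card S * Nat.card G := by
  have h_card (T : Set H) : Nat.card (φ ⁻¹' T) = Nat.card T * Nat.card φ.ker := by
    rw [← Nat.card_prod]
    exact Nat.card_congr <|
      (Equiv.sigmaSubtypeFiberEquivSubtype φ fun _ => Iff.rfl).symm.trans <|
        (Equiv.sigmaCongrRight fun h : T =>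
          MonoidHom.fiberEquivKerOfSurjective hφ (h : H)).trans (Equiv.sigmaEquivProd _ _)
  have h_univ := h_card Set.univ
  rw [Set.preimage_univ, Nat.card_univ, Nat.card_univ] at h_univ
  rw [h_card, h_univ]
  ring

theorem wordProb_eq_of_surjective [Finite G] (φ : G →* H) (hφ : Function.Surjective φ)
    (w : FreeGroup (Fin k)) (h : H) :
    wordProb w h =
      Nat.card {f : Fin k → G // φ (FreeGroup.lift f w) = h} / (Nat.card G : ℝ) ^ k := by
  have : Finite H := Finite.of_surjective φ hφ
  have h_card := card_preimage_mul_card (φ.compLeft (Fin k)) hφ.comp_left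
    {f | FreeGroup.lift f w = h}
  simp only [Nat.card_fun, Nat.card_fin] at h_card
  rw [wordProb, div_eq_div_iff (pow_ne_zero _ (Nat.cast_ne_zero.2 Nat.card_pos.ne'))
    (pow_ne_zero _ (Nat.cast_ne_zero.2 Nat.card_pos.ne'))]
  simp only [map_freeGroup_lift]
  exact_mod_cast h_card.symm

theorem card_lift_pcomm_eq_sum [Fintype G] (w : FreeGroup (Fin k)) (g : G) :
    Nat.card {f : Fin (k + 1) → G //
        FreeGroup.lift f (pcomm (FreeGroup.map Fin.castSucc w) (FreeGroup.of (Fin.last k))) = g} =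
      ∑ x : Fin k → G, Nat.card {y : G // pcomm (FreeGroup.lift x w) y = g} := by
  let e : (Fin k → G) × G ≃ (Fin (k + 1) → G) :=
    (Equiv.prodComm _ _).trans (Fin.snocEquiv fun _ => G)
  rw [← Nat.card_sigma]
  refine Nat.card_congr <| ((Equiv.subtypeEquiv e fun p => ?_).symm).trans
    (Equiv.subtypeProdEquivSigmaSubtype fun x y => pcomm (FreeGroup.lift x w) y = g)
  rw [lift_pcomm_map_castSucc]
  simp [e, Fin.snocEquiv]

theorem wordProb_pcomm_le_sum_inv_index [Fintype G] (w : FreeGroup (Fin k)) (g : G) :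
    wordProb (pcomm (FreeGroup.map Fin.castSucc w) (FreeGroup.of (Fin.last k))) g ≤
      (∑ x : Fin k → G, ((Subgroup.centralizer {FreeGroup.lift x w}).index : ℝ)⁻¹) /
        (Nat.card G : ℝ) ^ k := by
  have h_fiber (a : G) : (Nat.card {y : G // pcomm a y = g} : ℝ) / Nat.card G ≤
      ((Subgroup.centralizer {a}).index : ℝ)⁻¹ := by
    rw [← Subgroup.card_mul_index (Subgroup.centralizer {a}), Nat.cast_mul, ← div_div, ← one_div]
    gcongr
    exact div_le_one_of_le₀ (by exact_mod_cast card_pcomm_eq_le_card_centralizer a g)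
      (Nat.cast_nonneg _)
  rw [wordProb, card_lift_pcomm_eq_sum, Nat.cast_sum, pow_succ', ← div_div, Finset.sum_div]
  gcongr
  exact h_fiber _

theorem wordProb_pcomm_le [Finite G] (w : FreeGroup (Fin k)) (g : G) (N : ℕ) :
    wordProb (pcomm (FreeGroup.map Fin.castSucc w) (FreeGroup.of (Fin.last k))) g ≤
      wordProb w (1 : G ⧸ powCentralizer G N.factorial) + 1 / (N + 1) := by
  cases nonempty_fintype G
  set K := powCentralizer G N.factorial
  have h_quot : wordProb w (1 : G ⧸ K) =
      (∑ x : Fin k → G, if FreeGroup.lift x w ∈ K then 1 else 0) / (Nat.card G : ℝ) ^ k := by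
    rw [wordProb_eq_of_surjective (QuotientGroup.mk' K) (QuotientGroup.mk'_surjective K),
      Finset.sum_boole]
    simp [Nat.card_eq_fintype_card, Fintype.card_subtype]
  calc wordProb (pcomm (FreeGroup.map Fin.castSucc w) (FreeGroup.of (Fin.last k))) g
      ≤ (∑ x : Fin k → G, ((Subgroup.centralizer {FreeGroup.lift x w}).index : ℝ)⁻¹) /
          (Nat.card G : ℝ) ^ k := wordProb_pcomm_le_sum_inv_index w g
    _ ≤ (∑ x : Fin k → G, ((if FreeGroup.lift x w ∈ K then 1 else 0) + 1 / ((N : ℝ) + 1))) /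
          (Nat.card G : ℝ) ^ k := by
        gcongr
        exact inv_index_centralizer_le _ N
    _ = wordProb w (1 : G ⧸ K) + 1 / (N + 1) := by
        rw [h_quot, Finset.sum_add_distrib, add_div, Finset.sum_const, Finset.card_univ,
          Fintype.card_fun, Fintype.card_fin, nsmul_eq_mul, Nat.cast_pow, Nat.card_eq_fintype_card,
          mul_div_cancel_left₀ _ (by simp)]

end WordProb

/-- If `w(x₁, …, x_k)` is good then so is
`w'(x₁, …, x_{k+1}) = [w(x₁, …, x_k), x_{k+1}]`. -/
theorem stmt7 (k : ℕ) (w : FreeGroup (Fin k)) (hw : IsGood w) :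
    IsGood (pcomm (FreeGroup.map Fin.castSucc w) (FreeGroup.of (Fin.last k))) := by
  refine ⟨by simpa using pcomm_map_castSucc_of_last_pow_ne_one hw.1 one_ne_zero, fun ε hε => ?_⟩
  obtain ⟨m, v, hv_ne, hv⟩ := hw.2 (ε / 2) (half_pos hε)
  obtain ⟨N, hN⟩ := exists_nat_one_div_lt (half_pos hε)
  refine ⟨m + 1, pcomm (FreeGroup.map Fin.castSucc v) (FreeGroup.of (Fin.last m) ^ N.factorial),
    pcomm_map_castSucc_of_last_pow_ne_one hv_ne N.factorial_ne_zero, fun G _ _ ⟨g, hg⟩ => ?_⟩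
  have h_quot : ε / 2 ≤ wordProb w (1 : G ⧸ powCentralizer G N.factorial) := by
    linarith [wordProb_pcomm_le w g N]
  exact lift_pcomm_pow_eq_one (hv _ ⟨1, h_quot⟩)
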